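/- arXiv:1812.08242 — 3 statements merged into one kernel-verified Lean document; each statement's English description precedes it below -/
import Mathlib

section
/- For any subset Λ' ⊆ {1,…,N}, the dissipative subspace L_−(Λ') is invariant under A, and L_−(Λ') equals the linear span of {A^k g_n : k = 0,1,2,…; n ∈ Λ'} and also equals the linear span of {(Aᵀ)^k g_n : k = 0,1,2,…; n ∈ Λ'}, where g_n = (0, e_n) ∈ ℝ^{2N} and Aᵀ is the transpose (adjoint with respect to the standard inner product) of A. -/
open Matrix

variable {N : ℕ}

/-- The Hamiltonian matrix `A = [[0, (1/M)I], [−V, 0]]` on `L = ℝ^N × ℝ^N`. -/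
noncomputable def hamMatrix (M : ℝ) (V : Matrix (Fin N) (Fin N) ℝ) :
    Matrix (Fin N ⊕ Fin N) (Fin N ⊕ Fin N) ℝ :=
  Matrix.fromBlocks 0 ((1 / M) • 1) (-V) 0

/-- The subspace `l_V(Λ')` of `ℝ^N` spanned by the vectors `V^k e_n`, `n ∈ Λ'`, `k ≥ 0`. -/
def lV (V : Matrix (Fin N) (Fin N) ℝ) (Λ' : Finset (Fin N)) : Submodule ℝ (Fin N → ℝ) :=
  Submodule.span ℝ {v | ∃ k : ℕ, ∃ i ∈ Λ', v = (V ^ k).mulVec (Pi.single i 1)}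

/-- The dissipative subspace `L_−(Λ') = {(q,p) : q,p ∈ l_V(Λ')}` of `ℝ^{2N}`. -/
def Lminus (V : Matrix (Fin N) (Fin N) ℝ) (Λ' : Finset (Fin N)) :
    Submodule ℝ ((Fin N ⊕ Fin N) → ℝ) :=
  (lV V Λ').comap (LinearMap.funLeft ℝ ℝ Sum.inl) ⊓
    (lV V Λ').comap (LinearMap.funLeft ℝ ℝ Sum.inr)

/-- The vector `g_n = (0, e_n) ∈ ℝ^{2N}`. -/
def gvec (n : Fin N) : (Fin N ⊕ Fin N) → ℝ := Pi.single (Sum.inr n) 1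

theorem lV_inv (V : Matrix (Fin N) (Fin N) ℝ) (Λ' : Finset (Fin N)) (w : Fin N → ℝ)
    (hw : w ∈ lV V Λ') : V.mulVec w ∈ lV V Λ' := by
  have h : lV V Λ' ≤ (lV V Λ').comap V.mulVecLin := by
    conv_lhs => unfold lV
    rw [Submodule.span_le]
    rintro _ ⟨k, i, hi, rfl⟩
    refine Submodule.subset_span ⟨k + 1, i, hi, ?_⟩
    rw [pow_succ', ← Matrix.mulVec_mulVec]; rfl
  exact h hw

theorem lV_surj (V : Matrix (Fin N) (Fin N) ℝ) (hV : V.PosDef) (Λ' : Finset (Fin N))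
    (w : Fin N → ℝ) (hw : w ∈ lV V Λ') : ∃ w' ∈ lV V Λ', V.mulVec w' = w := by
  have hinj : Function.Injective V.mulVec := Matrix.mulVec_injective_iff_isUnit.mpr hV.isUnit
  let f : lV V Λ' →ₗ[ℝ] lV V Λ' := V.mulVecLin.restrict (fun x hx => lV_inv V Λ' x hx)
  have hf : Function.Injective f := by
    intro x y hxy
    apply Subtype.ext
    apply hinj
    exact congrArg Subtype.val hxy
  obtain ⟨x, hx⟩ := (LinearMap.injective_iff_surjective.mp hf) ⟨w, hw⟩
  exact ⟨x, x.2, congrArg Subtype.val hx⟩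

theorem mem_Lminus_elim (V : Matrix (Fin N) (Fin N) ℝ) (Λ' : Finset (Fin N))
    (q p : Fin N → ℝ) : Sum.elim q p ∈ Lminus V Λ' ↔ q ∈ lV V Λ' ∧ p ∈ lV V Λ' := Iff.rfl

theorem gvec_eq (i : Fin N) : gvec i = Sum.elim (0 : Fin N → ℝ) (Pi.single i 1 : Fin N → ℝ) := by
  ext (j | j) <;> simp [gvec, Pi.single_apply]

theorem block_general (V P Q : Matrix (Fin N) (Fin N) ℝ) (Λ' : Finset (Fin N)) (c : ℝ)
    (hc : c ≠ 0) (hQP : Q * P = c • V)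
    (hP : ∀ w ∈ lV V Λ', P.mulVec w ∈ lV V Λ') (hQ : ∀ w ∈ lV V Λ', Q.mulVec w ∈ lV V Λ')
    (hs : ∀ w ∈ lV V Λ', ∃ w' ∈ lV V Λ', P.mulVec w' = w) :
    (∀ ψ ∈ Lminus V Λ', (Matrix.fromBlocks 0 P Q 0).mulVec ψ ∈ Lminus V Λ') ∧
    Lminus V Λ' = Submodule.span ℝ
      {v | ∃ k : ℕ, ∃ i ∈ Λ', v = ((Matrix.fromBlocks 0 P Q 0) ^ k).mulVec (gvec i)} := by
  have hB : ∀ q p : Fin N → ℝ, (Matrix.fromBlocks 0 P Q 0).mulVec (Sum.elim q p)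
      = Sum.elim (P.mulVec p) (Q.mulVec q) := by
    intro q p
    simp [Matrix.fromBlocks_mulVec]
  have hinv : ∀ ψ ∈ Lminus V Λ', (Matrix.fromBlocks 0 P Q 0).mulVec ψ ∈ Lminus V Λ' := by
    intro ψ hψ
    rw [← Sum.elim_comp_inl_inr ψ] at hψ ⊢
    rw [hB, mem_Lminus_elim]
    rw [mem_Lminus_elim] at hψ
    exact ⟨hP _ hψ.2, hQ _ hψ.1⟩
  refine ⟨hinv, ?_⟩
  generalize hBd : Matrix.fromBlocks 0 P Q 0 = B at *
  set S := Submodule.span ℝ {v | ∃ k : ℕ, ∃ i ∈ Λ', v = (B ^ k).mulVec (gvec i)} with hS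
  have hSinv : ∀ x ∈ S, B.mulVec x ∈ S := by
    have h : S ≤ S.comap B.mulVecLin := by
      conv_lhs => rw [hS]
      rw [Submodule.span_le]
      rintro _ ⟨k, i, hi, rfl⟩
      refine Submodule.subset_span ⟨k + 1, i, hi, ?_⟩
      rw [pow_succ', ← Matrix.mulVec_mulVec]; rfl
    exact fun x hx => h hx
  have hV2 : ∀ w, Sum.elim (0 : Fin N → ℝ) w ∈ S → Sum.elim (0 : Fin N → ℝ) (V.mulVec w) ∈ S := by
    intro w hw
    have h := S.smul_mem c⁻¹ (hSinv _ (hSinv _ hw))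
    rw [hB, hB, Matrix.mulVec_zero, Matrix.mulVec_zero, Matrix.mulVec_mulVec, hQP] at h
    convert h using 1
    ext (j | j) <;> simp [Matrix.smul_mulVec, hc]
  have hlow : ∀ w ∈ lV V Λ', (Sum.elim 0 w : Fin N ⊕ Fin N → ℝ) ∈ S := by
    intro w hw
    unfold lV at hw
    induction hw using Submodule.span_induction with
    | mem x hx =>
      obtain ⟨k, i, hi, rfl⟩ := hx
      induction k with
      | zero => exact Submodule.subset_span ⟨0, i, hi, by rw [pow_zero, pow_zero, Matrix.one_mulVec, Matrix.one_mulVec, gvec_eq]⟩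
      | succ k ih =>
        have := hV2 _ ih
        rwa [Matrix.mulVec_mulVec, ← pow_succ'] at this
    | zero => convert S.zero_mem using 1; ext (j | j) <;> simp
    | add x y _ _ hx hy => convert S.add_mem hx hy using 1; ext (j | j) <;> simp
    | smul a x _ hx => convert S.smul_mem a hx using 1; ext (j | j) <;> simp
  apply le_antisymm
  · intro ψ hψ
    rw [← Sum.elim_comp_inl_inr ψ, mem_Lminus_elim] at hψ
    obtain ⟨w', hw', hPw⟩ := hs _ hψ.1
    have h1 := hSinv _ (hlow _ hw')
    rw [hB, hPw] at h1
    convert S.add_mem h1 (hlow _ hψ.2) using 1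
    ext (j | j) <;> simp
  · rw [hS, Submodule.span_le]
    rintro _ ⟨k, i, hi, rfl⟩
    change _ ∈ Lminus V Λ'
    induction k with
    | zero =>
      rw [pow_zero, Matrix.one_mulVec, gvec_eq, mem_Lminus_elim]
      exact ⟨Submodule.zero_mem _, Submodule.subset_span ⟨0, i, hi, by rw [pow_zero, Matrix.one_mulVec]⟩⟩
    | succ k ih =>
      have := hinv _ ih
      rwa [Matrix.mulVec_mulVec, ← pow_succ'] at this

/-- The dissipative subspace `L_−(Λ')` is invariant under `A`, and equals both the span of
`{A^k g_n : k ≥ 0, n ∈ Λ'}` and the span of `{(Aᵀ)^k g_n : k ≥ 0, n ∈ Λ'}`. -/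
theorem Lminus_invariant_and_span (M : ℝ) (hM : 0 < M)
    (V : Matrix (Fin N) (Fin N) ℝ) (hV : V.PosDef) (Λ' : Finset (Fin N)) :
    (∀ ψ ∈ Lminus V Λ', (hamMatrix M V).mulVec ψ ∈ Lminus V Λ') ∧
    Lminus V Λ' = Submodule.span ℝ
      {v | ∃ k : ℕ, ∃ i ∈ Λ', v = ((hamMatrix M V) ^ k).mulVec (gvec i)} ∧
    Lminus V Λ' = Submodule.span ℝ
      {v | ∃ k : ℕ, ∃ i ∈ Λ', v = ((hamMatrix M V)ᵀ ^ k).mulVec (gvec i)} := by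
  have hM0 : M ≠ 0 := hM.ne'
  have hsm : ∀ w ∈ lV V Λ', ((1 / M) • (1 : Matrix (Fin N) (Fin N) ℝ)).mulVec w ∈ lV V Λ' := by
    intro w hw
    rw [Matrix.smul_mulVec, Matrix.one_mulVec]
    exact Submodule.smul_mem _ _ hw
  have hneg : ∀ w ∈ lV V Λ', (-V).mulVec w ∈ lV V Λ' := by
    intro w hw
    rw [Matrix.neg_mulVec]
    exact Submodule.neg_mem _ (lV_inv V Λ' w hw)
  have hc : -(1 / M) ≠ 0 := neg_ne_zero.mpr (one_div_ne_zero hM0)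
  have h1 := block_general V ((1 / M) • 1) (-V) Λ' (-(1 / M)) hc (by simp) hsm hneg (by
    intro w hw
    refine ⟨M • w, Submodule.smul_mem _ _ hw, ?_⟩
    rw [Matrix.smul_mulVec, Matrix.one_mulVec, smul_smul, one_div_mul_cancel hM0, one_smul])
  have h2 := block_general V (-V) ((1 / M) • 1) Λ' (-(1 / M)) hc (by simp) hneg hsm (by
    intro w hw
    obtain ⟨w', hw', h⟩ := lV_surj V hV Λ' w hw
    refine ⟨-w', Submodule.neg_mem _ hw', ?_⟩
    rw [Matrix.neg_mulVec, Matrix.mulVec_neg, neg_neg, h])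
  have hT : (hamMatrix M V)ᵀ = Matrix.fromBlocks 0 (-V) ((1 / M) • 1) 0 := by
    have hVt : Vᵀ = V := by simpa [Matrix.conjTranspose_eq_transpose_of_trivial] using hV.isHermitian.eq
    simp [hamMatrix, Matrix.fromBlocks_transpose, hVt]
  refine ⟨h1.1, h1.2, ?_⟩
  rw [hT]
  exact h2.2
end

section
/- Let G : ℝ^k → ℝ^n be a real-analytic map whose image is all of ℝ^n (G is surjective). Then for every Borel measurable set B ⊆ ℝ^n, the Lebesgue measure of B is zero if and only if the Lebesgue measure of the preimage G^{-1}(B) in ℝ^k is zero. -/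
open MeasureTheory Topology Filter

lemma an_split {E R : Type} [NormedAddCommGroup E] [NormedSpace ℝ E] [FiniteDimensional ℝ E]
    [NormedAddCommGroup R] [NormedSpace ℝ R] [FiniteDimensional ℝ R]
    (g : E → R) (x : E) (hg : AnalyticAt ℝ g x)
    (hs : Function.Surjective (fderiv ℝ g x)) :
    ∃ (p : E →L[ℝ] (fderiv ℝ g x).ker) (Ψ : R × (fderiv ℝ g x).ker → E),
      (∀ v : (fderiv ℝ g x).ker, p v = v) ∧
      AnalyticAt ℝ Ψ (g x, p x) ∧
      (∀ᶠ y in 𝓝 x, Ψ (g y, p y) = y) ∧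
      (∀ᶠ z in 𝓝 (g x, p x), g (Ψ z) = z.1 ∧ p (Ψ z) = z.2) ∧
      Nonempty (E ≃L[ℝ] R × (fderiv ℝ g x).ker) := by
  set L := fderiv ℝ g x with hL
  obtain ⟨p, hp⟩ : L.ker.ClosedComplemented := Submodule.ClosedComplemented.of_finiteDimensional _
  have hinj : Function.Injective (L.prod p) := by
    rw [injective_iff_map_eq_zero]
    intro v hv
    simp only [ContinuousLinearMap.prod_apply, Prod.mk_eq_zero] at hv
    have := hp ⟨v, hv.1⟩
    simpa [hv.2, eq_comm] using congrArg Subtype.val this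
  have hsur : Function.Surjective (L.prod p) := by
    rintro ⟨a, b⟩
    obtain ⟨u, rfl⟩ := hs a
    refine ⟨u + (b - p u : L.ker), ?_⟩
    have h1 : L ((b - p u : L.ker) : E) = 0 := (b - p u : L.ker).2
    simp only [ContinuousLinearMap.prod_apply, map_add, h1, hp]
    simp
  let e : E ≃L[ℝ] R × L.ker := (LinearEquiv.ofBijective (L.prod p).toLinearMap ⟨hinj, hsur⟩).toContinuousLinearEquiv
  have he : (e : E →L[ℝ] R × L.ker) = L.prod p := by ext <;> rfl
  have hφa : AnalyticAt ℝ (fun y => (g y, p y)) x := hg.prod (p.analyticAt x)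
  have hφ : HasStrictFDerivAt (fun y => (g y, p y)) (e : E →L[ℝ] R × L.ker) x := by
    rw [he]
    exact hg.hasStrictFDerivAt.prodMk p.hasStrictFDerivAt
  let P := hφ.toOpenPartialHomeomorph _
  have hx : x ∈ P.source := hφ.mem_toOpenPartialHomeomorph_source
  have hPx : P x = (g x, p x) := rfl
  refine ⟨p, P.symm, hp, ?_, ?_, ?_, ⟨e⟩⟩
  · exact P.analyticAt_symm' (i := e) hx hφa hφ.hasFDerivAt.fderiv
  · exact P.eventually_left_inverse hx
  · have := P.eventually_right_inverse' hx
    filter_upwards [this] with z hz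
    exact ⟨congrArg Prod.fst hz, congrArg Prod.snd hz⟩

lemma hyper_null {E H : Type} [NormedAddCommGroup E] [NormedSpace ℝ E] [FiniteDimensional ℝ E]
    [NormedAddCommGroup H] [NormedSpace ℝ H] [CompleteSpace H]
    (m : OuterMeasure E) (A : Set E)
    (hm : ∀ (E' : Type) [NormedAddCommGroup E'] [NormedSpace ℝ E'] [FiniteDimensional ℝ E'],
      Module.finrank ℝ E' < Module.finrank ℝ E → ∀ (ψ : E' → E) (S : Set E'),
      (∀ s ∈ S, AnalyticAt ℝ ψ s) → m (ψ '' S ∩ A) = 0)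
    (h : E → H) (U : Set E) (hU : IsPreconnected U) (hUo : IsOpen U) (hh : AnalyticOnNhd ℝ h U)
    (x0 : E) (hx0 : x0 ∈ U) (hne : ¬ h =ᶠ[𝓝 x0] 0) :
    m (A ∩ {z ∈ U | h z = 0}) = 0 := by
  have hcov : A ∩ {z ∈ U | h z = 0} ⊆ ⋃ i : ℕ, {z ∈ A ∩ U | iteratedFDeriv ℝ i h z = 0 ∧
      iteratedFDeriv ℝ (i+1) h z ≠ 0} := by
    rintro z ⟨hzA, hzU, hz⟩
    by_contra hcon
    simp only [Set.mem_iUnion, Set.mem_ofPred_eq, not_exists, not_and, not_not] at hcon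
    have hall : ∀ i, iteratedFDeriv ℝ i h z = 0 := by
      intro i
      induction i with
      | zero => ext v; simpa using hz
      | succ i ih => exact hcon i ⟨hzA, hzU⟩ ih
    apply hne
    have hev : h =ᶠ[𝓝 z] 0 := by
      obtain ⟨q, r, hq⟩ := hh z hzU
      filter_upwards [Metric.eball_mem_nhds z hq.r_pos] with y hy
      have hy' : y - z ∈ Metric.eball (0:E) r := by
        simpa [Metric.mem_eball, edist_eq_enorm_sub] using hy
      have := hq.hasSum_iteratedFDeriv hy'
      simp only [hall] at this
      have h2 : HasSum (fun _ : ℕ => (0 : H)) (h (z + (y - z))) := by simpa using this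
      have h3 := h2.unique hasSum_zero
      simpa using h3
    have := hh.eqOn_zero_of_preconnected_of_eventuallyEq_zero hU hzU hev
    filter_upwards [hUo.mem_nhds hx0] with y hy using this hy
  refine measure_mono_null hcov (measure_iUnion_null fun i => ?_)
  refine measure_null_of_locally_null _ ?_
  rintro z ⟨⟨hzA, hzU⟩, hz0, hz1⟩
  have han := hh.iteratedFDeriv i z hzU
  have hd : fderiv ℝ (iteratedFDeriv ℝ i h) z ≠ 0 := by
    intro h0
    apply hz1
    ext v
    simp [iteratedFDeriv_succ_apply_left, h0]
  obtain ⟨v, hv⟩ : ∃ v, fderiv ℝ (iteratedFDeriv ℝ i h) z v ≠ 0 := by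
    by_contra hc
    push Not at hc
    exact hd (by ext1 v; simp [hc v])
  obtain ⟨l, hl⟩ := SeparatingDual.exists_ne_zero (R := ℝ) hv
  let w : E → ℝ := fun y => l (iteratedFDeriv ℝ i h y)
  have hw : AnalyticAt ℝ w z := (l.analyticAt _).comp han
  have hwd : fderiv ℝ w z = l.comp (fderiv ℝ (iteratedFDeriv ℝ i h) z) :=
    (l.hasFDerivAt.comp z han.differentiableAt.hasFDerivAt).fderiv
  have hwz : w z = 0 := by simp [w, hz0]
  have hws : Function.Surjective (fderiv ℝ w z) := by
    intro c
    refine ⟨(c / l (fderiv ℝ (iteratedFDeriv ℝ i h) z v)) • v, ?_⟩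
    rw [hwd]
    simp [hl]
  obtain ⟨p, Ψ, hp, hΨ, hl1, hr1, -⟩ := an_split w z hw hws
  have hdim : Module.finrank ℝ (fderiv ℝ w z).ker < Module.finrank ℝ E := by
    apply Submodule.finrank_lt
    intro htop
    obtain ⟨a, ha⟩ := hws 1
    have : a ∈ (fderiv ℝ w z).ker := by rw [htop]; trivial
    have h3 : fderiv ℝ w z a = 0 := this
    simp [h3] at ha
  refine ⟨_, inter_mem_nhdsWithin _ (?_ : {y | Ψ (w y, p y) = y ∧ AnalyticAt ℝ Ψ (w y, p y)} ∈ 𝓝 z), ?_⟩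
  · have hc : ContinuousAt (fun y => (w y, p y)) z := hw.continuousAt.prodMk p.continuous.continuousAt
    exact hl1.and (hc.eventually hΨ.eventually_analyticAt)
  · refine measure_mono_null ?_ (hm (fderiv ℝ w z).ker hdim (fun v => Ψ (0, v))
      {v | AnalyticAt ℝ (fun v => Ψ (0, v)) v} (fun s hs => hs))
    rintro y ⟨⟨⟨hyA, hyU⟩, hy0, -⟩, hy1, hy2⟩
    have hwy : w y = 0 := by simp [w, hy0]
    rw [hwy] at hy1 hy2
    refine ⟨⟨p y, ?_, hy1⟩, hyA⟩
    exact AnalyticAt.fun_comp (f := fun v => ((0:ℝ), v)) hy2 (analyticAt_const.prod analyticAt_id)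

lemma lowdim_null {E F : Type} [NormedAddCommGroup E] [NormedSpace ℝ E] [FiniteDimensional ℝ E]
    [NormedAddCommGroup F] [NormedSpace ℝ F] [FiniteDimensional ℝ F]
    [MeasurableSpace F] [BorelSpace F] (μ : Measure F) [μ.IsAddHaarMeasure]
    (hd : Module.finrank ℝ E < Module.finrank ℝ F) (f : E → F) (S : Set E)
    (hf : ∀ x ∈ S, DifferentiableAt ℝ f x) : μ (f '' S) = 0 := by
  obtain ⟨π, hπ⟩ : ∃ π : F →ₗ[ℝ] E, Function.Surjective π := by
    let eE := (Module.finBasis ℝ E).equivFun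
    let eF := (Module.finBasis ℝ F).equivFun
    refine ⟨eE.symm.toLinearMap ∘ₗ LinearMap.funLeft ℝ ℝ (Fin.castLE hd.le) ∘ₗ eF.toLinearMap, ?_⟩
    exact eE.symm.surjective.comp ((LinearMap.funLeft_surjective_of_injective ℝ ℝ _
      (Fin.castLE_injective hd.le)).comp eF.surjective)
  let P : F →L[ℝ] E := π.toContinuousLinearMap
  let j : E → F := Function.surjInv hπ
  have hP : ∀ x, P (j x) = x := fun x => Function.surjInv_eq hπ x
  have himg : f '' S ⊆ (f ∘ P) '' (P ⁻¹' S) := by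
    rintro _ ⟨x, hx, rfl⟩
    exact ⟨j x, by simpa [hP] using hx, by simp [hP]⟩
  refine measure_mono_null himg ?_
  refine addHaar_image_eq_zero_of_det_fderivWithin_eq_zero μ
    (f' := fun y => (fderiv ℝ f (P y)).comp P) ?_ ?_
  · intro y hy
    exact ((hf _ hy).hasFDerivAt.comp y P.hasFDerivAt).hasFDerivWithinAt
  · intro y hy
    by_contra hne
    have hu : IsUnit (LinearMap.det ((fderiv ℝ f (P y)).comp P).toLinearMap) := isUnit_iff_ne_zero.2 hne
    have h1 := (LinearMap.isUnit_iff_ker_eq_bot _).1 ((LinearMap.isUnit_iff_isUnit_det _).2 hu)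
    have hinj : Function.Injective π := by
      rw [injective_iff_map_eq_zero]
      intro v hv
      have : v ∈ ((fderiv ℝ f (P y)).comp P).toLinearMap.ker := by
        have : P v = 0 := hv
        simp [this]
      rw [h1] at this
      simpa using this
    exact absurd (LinearMap.finrank_le_finrank_of_injective hinj) (not_le.2 hd)

lemma rank_aux {X F R : Type} [AddCommGroup X] [Module ℝ X] [FiniteDimensional ℝ X]
    [AddCommGroup F] [Module ℝ F] [FiniteDimensional ℝ F]
    [AddCommGroup R] [Module ℝ R] [FiniteDimensional ℝ R]
    (M : X →ₗ[ℝ] F) (q : F →ₗ[ℝ] R) (hs : Function.Surjective (q ∘ₗ M))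
    (hr : Module.finrank ℝ M.range ≤ Module.finrank ℝ R) (a : X) (ha : q (M a) = 0) : M a = 0 := by
  have h1 := M.finrank_range_add_finrank_ker
  have h2 := (q ∘ₗ M).finrank_range_add_finrank_ker
  rw [LinearMap.range_eq_top.2 hs, finrank_top] at h2
  have hle : M.ker ≤ (q ∘ₗ M).ker := LinearMap.ker_le_ker_comp _ _
  have := Submodule.eq_of_le_of_finrank_le hle (by omega)
  have h3 : a ∈ (q ∘ₗ M).ker := ha
  rw [← this] at h3
  exact h3

theorem an_sard {F : Type} [NormedAddCommGroup F] [NormedSpace ℝ F] [FiniteDimensional ℝ F]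
    [MeasurableSpace F] [BorelSpace F] (μ : Measure F) [μ.IsAddHaarMeasure] (d : ℕ) :
    ∀ (E : Type) [NormedAddCommGroup E] [NormedSpace ℝ E] [FiniteDimensional ℝ E],
      Module.finrank ℝ E = d → ∀ (f : E → F) (A : Set E), (∀ x ∈ A, AnalyticAt ℝ f x) →
      (∀ x ∈ A, ¬ Function.Surjective (fderiv ℝ f x)) → μ (f '' A) = 0 := by
  induction d using Nat.strong_induction_on with
  | _ d IH =>
  intro E _ _ _ hEd f A hA hns
  let m : OuterMeasure E := OuterMeasure.comap f μ.toOuterMeasure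
  have hm_def : ∀ s, m s = μ (f '' s) := fun s => rfl
  have hcov : A ⊆ ⋃ r : ℕ, {x ∈ A | Module.finrank ℝ (fderiv ℝ f x).range = r} := by
    intro x hx
    simp [hx]
  rw [← hm_def]
  refine measure_mono_null hcov (measure_iUnion_null fun r => ?_)
  set Ar := {x ∈ A | Module.finrank ℝ (fderiv ℝ f x).range = r} with hAr
  refine measure_null_of_locally_null _ ?_
  rintro x ⟨hxA, hxr⟩
  set L := fderiv ℝ f x with hL
  have hRlt : Module.finrank ℝ L.range < Module.finrank ℝ F := by
    apply Submodule.finrank_lt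
    intro h
    exact hns x hxA (LinearMap.range_eq_top.1 h)
  obtain ⟨q, hq⟩ : L.range.ClosedComplemented := Submodule.ClosedComplemented.of_finiteDimensional _
  let g : E → L.range := fun y => q (f y)
  have hfx := hA x hxA
  have hgx : AnalyticAt ℝ g x := (q.analyticAt _).comp hfx
  have hgd : fderiv ℝ g x = q.comp L := (q.hasFDerivAt.comp x hfx.differentiableAt.hasFDerivAt).fderiv
  have hgs : Function.Surjective (fderiv ℝ g x) := by
    rw [hgd]
    rintro ⟨_, v, rfl⟩
    exact ⟨v, hq ⟨L v, v, rfl⟩⟩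
  obtain ⟨K, p, Ψ, hΨ, hl, hr⟩ : ∃ (K : Submodule ℝ E) (p : E →L[ℝ] K) (Ψ : L.range × K → E),
      AnalyticAt ℝ Ψ (g x, p x) ∧ (∀ᶠ y in 𝓝 x, Ψ (g y, p y) = y) ∧
      (∀ᶠ z in 𝓝 (g x, p x), g (Ψ z) = z.1 ∧ p (Ψ z) = z.2) := by
    obtain ⟨p, Ψ, hp, hΨ, hl, hr, -⟩ := an_split g x hgx hgs
    exact ⟨_, p, Ψ, hΨ, hl, hr⟩
  have hΨx : Ψ (g x, p x) = x := hl.self_of_nhds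
  have hφ : ContinuousAt (fun y => (g y, p y)) x :=
    hgx.continuousAt.prodMk p.continuous.continuousAt
  have hfΨ : AnalyticAt ℝ (f ∘ Ψ) (g x, p x) := AnalyticAt.comp (by rwa [hΨx]) hΨ
  let h : L.range × K → (K →L[ℝ] F) := fun z =>
    (fderiv ℝ (f ∘ Ψ) z).comp (ContinuousLinearMap.inr ℝ L.range K)
  have hh : AnalyticAt ℝ h (g x, p x) := by
    let C := (ContinuousLinearMap.compL ℝ K (L.range × K) F).flip (ContinuousLinearMap.inr ℝ L.range K)
    exact (C.analyticAt _).comp hfΨ.fderiv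
  by_cases hz : h =ᶠ[𝓝 (g x, p x)] 0
  · obtain ⟨ε, hε, hball⟩ := Metric.eventually_nhds_iff_ball.1
      (hz.and (hfΨ.eventually_analyticAt))
    refine ⟨_, inter_mem_nhdsWithin _ (hl.and (hφ.eventually (Metric.ball_mem_nhds _ hε))), ?_⟩
    rw [hm_def]
    refine measure_mono_null ?_ (lowdim_null μ hRlt (fun u => (f ∘ Ψ) (u, p x))
      (Metric.ball (g x) ε) ?_)
    · rintro _ ⟨y, ⟨-, hy1, hy2⟩, rfl⟩
      have hy2' : g y ∈ Metric.ball (g x) ε ∧ p y ∈ Metric.ball (p x) ε := by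
        have hy3 : (g y, p y) ∈ Metric.ball (g x, p x) ε := hy2
        rw [← ball_prod_same] at hy3; exact hy3
      refine ⟨g y, hy2'.1, ?_⟩
      have hder : ∀ v ∈ Metric.ball (p x) ε,
          HasFDerivAt (fun v => (f ∘ Ψ) (g y, v)) (0 : K →L[ℝ] F) v := by
        intro v hv
        have hin : (g y, v) ∈ Metric.ball (g x, p x) ε := by
          rw [← ball_prod_same]; exact ⟨hy2'.1, hv⟩
        obtain ⟨h0, han⟩ := hball _ hin
        have h1 := han.differentiableAt.hasFDerivAt.comp v
          (hasFDerivAt_prodMk_right (𝕜 := ℝ) (g y) v)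
        have h2 : (fderiv ℝ (f ∘ Ψ) (g y, v)).comp (ContinuousLinearMap.inr ℝ L.range K) = 0 := h0
        rw [h2] at h1
        exact h1
      have hc := (convex_ball (p x) ε).is_const_of_fderivWithin_eq_zero (𝕜 := ℝ)
        (f := fun v => (f ∘ Ψ) (g y, v))
        (fun v hv => (hder v hv).differentiableAt.differentiableWithinAt)
        (fun v hv => by
          rw [fderivWithin_of_isOpen Metric.isOpen_ball hv]; exact (hder v hv).fderiv)
        (Metric.mem_ball_self hε) hy2'.2
      have hc' : (f ∘ Ψ) (g y, p x) = (f ∘ Ψ) (g y, p y) := hc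
      have h5 : Ψ (g y, p y) = y := hy1
      simp only [Function.comp] at hc' ⊢
      rw [hc', h5]
    · intro u hu
      have hin : (u, p x) ∈ Metric.ball (g x, p x) ε := by
        rw [← ball_prod_same]; exact ⟨hu, Metric.mem_ball_self hε⟩
      exact (hball _ hin).2.differentiableAt.comp (f := fun u => (u, p x)) u
        (hasFDerivAt_prodMk_left (𝕜 := ℝ) u (p x)).differentiableAt
  · let hE : E → (K →L[ℝ] F) := fun y => h (g y, p y)
    have hEx : AnalyticAt ℝ hE x :=
      AnalyticAt.comp (f := fun y => (g y, p y)) hh (hgx.prod (p.analyticAt x))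
    have hEne : ¬ hE =ᶠ[𝓝 x] 0 := by
      intro h0
      apply hz
      have hc : Tendsto Ψ (𝓝 (g x, p x)) (𝓝 x) := by
        have := hΨ.continuousAt.tendsto
        rwa [hΨx] at this
      filter_upwards [hc.eventually h0, hr] with z h1 h2
      have h3 : h (g (Ψ z), p (Ψ z)) = 0 := h1
      rwa [h2.1, h2.2] at h3
    obtain ⟨ε, hε, hball⟩ := Metric.eventually_nhds_iff_ball.1
      (hEx.eventually_analyticAt.and ((hφ.eventually hΨ.eventually_analyticAt).and
        (hl.and (hφ.eventually hr.eventually_nhds))))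
    refine ⟨_, inter_mem_nhdsWithin _ (Metric.ball_mem_nhds x hε), ?_⟩
    refine measure_mono_null ?_ (hyper_null m Ar ?_ hE (Metric.ball x ε)
      (convex_ball x ε).isPreconnected Metric.isOpen_ball (fun y hy => (hball y hy).1) x
      (Metric.mem_ball_self hε) hEne)
    · rintro y ⟨hyA, hyb⟩
      refine ⟨hyA, hyb, ?_⟩
      obtain ⟨-, h2, h3, h4⟩ := hball y hyb
      have hfy : HasFDerivAt f (fderiv ℝ f y) (Ψ (g y, p y)) := by
        rw [h3]; exact (hA y hyA.1).differentiableAt.hasFDerivAt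
      have hcomp := hfy.comp (g y, p y) h2.differentiableAt.hasFDerivAt
      have hqcomp : HasFDerivAt (fun z => q ((f ∘ Ψ) z)) (q.comp (fderiv ℝ (f ∘ Ψ) (g y, p y))) (g y, p y) :=
        q.hasFDerivAt.comp _ hcomp.differentiableAt.hasFDerivAt
      have hfst : HasFDerivAt (fun z => q ((f ∘ Ψ) z)) (ContinuousLinearMap.fst ℝ L.range K) (g y, p y) := by
        refine (hasFDerivAt_fst (𝕜 := ℝ)).congr_of_eventuallyEq ?_
        filter_upwards [h4] with z hz' using hz'.1
      have heq := hqcomp.unique hfst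
      have hrk : Module.finrank ℝ (fderiv ℝ (f ∘ Ψ) (g y, p y)).toLinearMap.range ≤
          Module.finrank ℝ L.range := by
        rw [hcomp.fderiv, hxr, ← hyA.2]
        exact Submodule.finrank_mono (LinearMap.range_comp_le_range _ _)
      show h (g y, p y) = 0
      ext1 v
      refine rank_aux (fderiv ℝ (f ∘ Ψ) (g y, p y)).toLinearMap q.toLinearMap ?_ hrk (0, v) ?_
      · intro u
        exact ⟨(u, 0), congrArg (fun T => T (u, 0)) heq⟩
      · exact congrArg (fun T => T (0, v)) heq
    · intro E' _ _ _ hE' ψ S hS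
      rw [hm_def]
      refine measure_mono_null ?_ (IH (Module.finrank ℝ E') (hEd ▸ hE') E' rfl (f ∘ ψ)
        (S ∩ ψ ⁻¹' Ar) ?_ ?_)
      · rintro _ ⟨_, ⟨⟨s, hs, rfl⟩, hsA⟩, rfl⟩
        exact ⟨s, ⟨hs, hsA⟩, rfl⟩
      · rintro s ⟨hs, hsA⟩
        exact (hA _ hsA.1).comp (hS s hs)
      · rintro s ⟨hs, hsA⟩ hsur
        rw [fderiv_comp s (hA _ hsA.1).differentiableAt (hS s hs).differentiableAt] at hsur
        exact hns _ hsA.1 (Function.Surjective.of_comp hsur)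

lemma null_map {X Y : Type} [NormedAddCommGroup X] [NormedSpace ℝ X] [FiniteDimensional ℝ X]
    [MeasurableSpace X] [BorelSpace X] (μ : Measure X) [μ.IsAddHaarMeasure]
    [NormedAddCommGroup Y] [NormedSpace ℝ Y] [FiniteDimensional ℝ Y]
    [MeasurableSpace Y] [BorelSpace Y] (ν : Measure Y) [ν.IsAddHaarMeasure]
    (e : Y ≃L[ℝ] X) (f : X → Y) (s : Set X) (hf : ∀ x ∈ s, DifferentiableAt ℝ f x)
    (hs : μ s = 0) : ν (f '' s) = 0 := by
  have h1 : μ ((fun x => e (f x)) '' s) = 0 :=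
    addHaar_image_eq_zero_of_differentiableOn_of_addHaar_eq_zero μ
      (fun x hx => (e.differentiableAt.comp x (hf x hx)).differentiableWithinAt) hs
  have hac : (ν.map e) ≪ μ := Measure.absolutelyContinuous_isAddHaarMeasure _ _
  have h2 := hac h1
  have h3 : ν.map e ((fun x => e (f x)) '' s) = ν (e ⁻¹' ((fun x => e (f x)) '' s)) :=
    e.toHomeomorph.toMeasurableEquiv.map_apply _
  rw [h3] at h2
  refine measure_mono_null ?_ h2
  rintro _ ⟨x, hx, rfl⟩
  exact ⟨x, hx, rfl⟩

lemma reg_local {E F : Type} [NormedAddCommGroup E] [NormedSpace ℝ E] [FiniteDimensional ℝ E]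
    [MeasurableSpace E] [BorelSpace E] (μ : Measure E) [μ.IsAddHaarMeasure]
    [NormedAddCommGroup F] [NormedSpace ℝ F] [FiniteDimensional ℝ F]
    [MeasurableSpace F] [BorelSpace F] (ν : Measure F) [ν.IsAddHaarMeasure]
    (g : E → F) (x : E) (hg : AnalyticAt ℝ g x) (hs : Function.Surjective (fderiv ℝ g x)) :
    ∃ V ∈ 𝓝 x, ∃ W ∈ 𝓝 (g x), ∀ S : Set F,
      (ν S = 0 → μ (V ∩ g ⁻¹' S) = 0) ∧ (μ (g ⁻¹' S) = 0 → ν (S ∩ W) = 0) := by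
  obtain ⟨p, Ψ, hp, hΨ, hl, hr, ⟨e⟩⟩ := an_split g x hg hs
  have hΨx : Ψ (g x, p x) = x := hl.self_of_nhds
  have hφ : ContinuousAt (fun y => (g y, p y)) x :=
    hg.continuousAt.prodMk p.continuous.continuousAt
  let κ : Measure (fderiv ℝ g x).ker := Measure.addHaar
  let V : Set E := {y | Ψ (g y, p y) = y ∧ AnalyticAt ℝ Ψ (g y, p y) ∧ AnalyticAt ℝ g y}
  have hV : V ∈ 𝓝 x :=
    hl.and ((hφ.eventually hΨ.eventually_analyticAt).and hg.eventually_analyticAt)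
  have hc : Tendsto Ψ (𝓝 (g x, p x)) (𝓝 x) := by
    have := hΨ.continuousAt.tendsto
    rwa [hΨx] at this
  obtain ⟨W, hW, W2, hW2, hWW⟩ := mem_nhds_prod_iff.1 (hr.and (hc.eventually hV))
  refine ⟨V, hV, W, hW, fun S => ⟨fun hS => ?_, fun hS => ?_⟩⟩
  · have h0 : (ν.prod κ) (S ×ˢ Set.univ) = 0 := by
      rw [Measure.prod_prod, hS, zero_mul]
    refine measure_mono_null ?_ (null_map (ν.prod κ) μ e Ψ
      ((S ×ˢ Set.univ) ∩ {z | AnalyticAt ℝ Ψ z}) (fun z hz => hz.2.differentiableAt)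
      (measure_mono_null Set.inter_subset_left h0))
    rintro y ⟨⟨h1, h2, -⟩, hy⟩
    exact ⟨(g y, p y), ⟨⟨hy, trivial⟩, h2⟩, h1⟩
  · have h0 : (ν.prod κ) ((S ∩ W) ×ˢ W2) = 0 := by
      refine measure_mono_null ?_ (null_map μ (ν.prod κ) e.symm (fun y => (g y, p y))
        (V ∩ g ⁻¹' S) (fun y hy => hy.1.2.2.differentiableAt.prodMk p.differentiableAt)
        (measure_mono_null Set.inter_subset_right hS))
      rintro ⟨u, v⟩ ⟨⟨hu, hu'⟩, hv⟩
      obtain ⟨⟨h1, h2⟩, h3⟩ := hWW (Set.mk_mem_prod hu' hv)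
      refine ⟨Ψ (u, v), ⟨h3, ?_⟩, Prod.ext h1 h2⟩
      show g (Ψ (u, v)) ∈ S
      rw [h1]; exact hu
    rw [Measure.prod_prod] at h0
    exact (mul_eq_zero.1 h0).resolve_right (Measure.measure_pos_of_mem_nhds κ hW2).ne'

lemma crit_null (k n : ℕ) (G : (Fin k → ℝ) → (Fin n → ℝ)) (hG : ∀ x, AnalyticAt ℝ G x)
    (x0 : Fin k → ℝ) (hx0 : Function.Surjective (fderiv ℝ G x0)) :
    volume {x | ¬ Function.Surjective (fderiv ℝ G x)} = 0 := by
  obtain ⟨T, hT⟩ := (fderiv ℝ G x0).toLinearMap.exists_rightInverse_of_surjective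
    (LinearMap.range_eq_top.2 hx0)
  let h : (Fin k → ℝ) → ℝ := fun x => LinearMap.det ((fderiv ℝ G x).toLinearMap ∘ₗ T)
  have hh : ∀ x, AnalyticAt ℝ h x := by
    intro x
    have hE : h = fun x => ∑ σ : Equiv.Perm (Fin n), (Equiv.Perm.sign σ : ℝ) *
        ∏ i, (fderiv ℝ G x (T (Pi.single i 1))) (σ i) := by
      funext x
      simp only [h]
      rw [← LinearMap.det_toMatrix', Matrix.det_apply']
      simp [LinearMap.toMatrix'_apply]
    rw [hE]
    refine Finset.analyticAt_fun_sum _ fun σ _ => analyticAt_const.mul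
      (Finset.analyticAt_fun_prod _ fun i _ => ?_)
    let ev : ((Fin k → ℝ) →L[ℝ] (Fin n → ℝ)) →L[ℝ] ℝ :=
      (ContinuousLinearMap.proj (R := ℝ) (φ := fun _ : Fin n => ℝ) (σ i)).comp (ContinuousLinearMap.apply ℝ _ (T (Pi.single i 1)))
    exact (ev.analyticAt _).comp (hG x).fderiv
  have hne : ¬ h =ᶠ[𝓝 x0] 0 := by
    intro h0
    have h1 : h x0 = 0 := h0.self_of_nhds
    simp only [h] at h1
    rw [hT, LinearMap.det_id] at h1
    exact one_ne_zero h1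
  have key := hyper_null (volume : Measure (Fin k → ℝ)).toOuterMeasure Set.univ ?_ h Set.univ
    isPreconnected_univ isOpen_univ (fun x _ => hh x) x0 trivial hne
  · refine measure_mono_null ?_ key
    intro x hx
    refine ⟨trivial, trivial, ?_⟩
    by_contra hd
    apply hx
    have hu := (LinearMap.isUnit_iff_isUnit_det _).2 (isUnit_iff_ne_zero.2 hd)
    have hr := LinearMap.range_eq_top.1 ((LinearMap.isUnit_iff_range_eq_top _).1 hu)
    exact Function.Surjective.of_comp hr
  · intro E' _ _ _ hd ψ S hS
    exact measure_mono_null Set.inter_subset_left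
      (lowdim_null volume hd ψ S fun s hs => (hS s hs).differentiableAt)

/-- If `G : ℝ^k → ℝ^n` is a real-analytic surjective map, then a Borel set `B ⊆ ℝ^n` is
Lebesgue-null if and only if its preimage `G⁻¹(B)` is Lebesgue-null in `ℝ^k`. -/
theorem analytic_surjective_null_iff_preimage_null (k n : ℕ)
    (G : (Fin k → ℝ) → (Fin n → ℝ))
    (hG : ∀ x, AnalyticAt ℝ G x) (hsurj : Function.Surjective G)
    (B : Set (Fin n → ℝ)) (hB : MeasurableSet B) :
    volume B = 0 ↔ volume (G ⁻¹' B) = 0 := by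
  let C := {x | ¬ Function.Surjective (fderiv ℝ G x)}
  have hC : volume (G '' C) = 0 :=
    an_sard volume _ (Fin k → ℝ) rfl G C (fun x _ => hG x) (fun x hx => hx)
  constructor
  · intro hB0
    obtain ⟨x0, hx0⟩ : ∃ x0, Function.Surjective (fderiv ℝ G x0) := by
      by_contra hcon
      push Not at hcon
      have hCu : C = Set.univ := Set.eq_univ_of_forall hcon
      rw [hCu, Set.image_univ, hsurj.range_eq] at hC
      exact isOpen_univ.measure_ne_zero volume Set.univ_nonempty hC
    have hsub : G ⁻¹' B ⊆ C ∪ (G ⁻¹' B ∩ Cᶜ) := by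
      intro x hx
      by_cases h : x ∈ C
      · exact Or.inl h
      · exact Or.inr ⟨hx, h⟩
    refine measure_mono_null hsub (measure_union_null (crit_null k n G hG x0 hx0) ?_)
    refine measure_null_of_locally_null _ ?_
    rintro x ⟨hxB, hx⟩
    obtain ⟨V, hV, W, hW, h⟩ := reg_local volume volume G x (hG x) (not_not.1 hx)
    refine ⟨_, inter_mem_nhdsWithin _ hV, measure_mono_null ?_ ((h B).1 hB0)⟩
    rintro y ⟨⟨h1, -⟩, h2⟩
    exact ⟨h2, h1⟩
  · intro hB0
    let m : OuterMeasure (Fin k → ℝ) := OuterMeasure.comap G volume.toOuterMeasure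
    have hm_def : ∀ s, m s = volume (G '' s) := fun s => rfl
    have hreg : m (G ⁻¹' B ∩ Cᶜ) = 0 := by
      refine measure_null_of_locally_null _ ?_
      rintro x ⟨hxB, hx⟩
      obtain ⟨V, hV, W, hW, h⟩ := reg_local volume volume G x (hG x) (not_not.1 hx)
      refine ⟨_, inter_mem_nhdsWithin _ ((hG x).continuousAt.preimage_mem_nhds hW), ?_⟩
      rw [hm_def]
      refine measure_mono_null ?_ ((h B).2 hB0)
      rintro _ ⟨y, ⟨⟨h1, -⟩, h2⟩, rfl⟩
      exact ⟨h1, h2⟩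
    rw [hm_def] at hreg
    refine measure_mono_null ?_ (measure_union_null hC hreg)
    intro b hb
    obtain ⟨x, rfl⟩ := hsurj b
    by_cases h : x ∈ C
    · exact Or.inl ⟨x, h, rfl⟩
    · exact Or.inr ⟨x, ⟨hb, h⟩, rfl⟩
end

section
/- Let M > 0, 0 < α < 1, γ = 1/α, and β > 0, and let v be a real random variable whose distribution has a density with respect to Lebesgue measure. Then the identity γ · E[exp(−(β/(2M))(γp − (1−γ)Mv)²)] = exp(−(β/(2M))p²) holds for every p ∈ ℝ if and only if v is Gaussian with mean 0 and variance σ² = (1+α)/(M(1−α)β) (equivalently, β = (1+α)/(M(1−α)σ²)). -/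
open MeasureTheory ProbabilityTheory

lemma gauss_conv_density (μ : Measure ℝ) [IsProbabilityMeasure μ] (s : NNReal) (hs : s ≠ 0) :
    μ.conv (gaussianReal 0 s)
      = volume.withDensity (fun p => ENNReal.ofReal (∫ w, gaussianPDFReal 0 s (p - w) ∂μ)) := by
  have hb : ∀ x, ‖gaussianPDFReal 0 s x‖ ≤ (√(2 * Real.pi * s))⁻¹ := by
    intro x
    rw [Real.norm_of_nonneg (gaussianPDFReal_nonneg _ _ _), gaussianPDFReal]
    refine mul_le_of_le_one_right (by positivity) ?_
    rw [Real.exp_le_one_iff]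
    exact div_nonpos_of_nonpos_of_nonneg (by nlinarith [sq_nonneg (x - 0)]) (by positivity)
  have h1 : ∀ p, ENNReal.ofReal (∫ w, gaussianPDFReal 0 s (p - w) ∂μ)
      = ∫⁻ w, gaussianPDF 0 s (p - w) ∂μ := by
    intro p
    rw [ofReal_integral_eq_lintegral_ofReal]
    · rfl
    · refine Integrable.of_bound (C := (√(2 * Real.pi * s))⁻¹) ?_ (ae_of_all _ fun w => hb _)
      exact ((measurable_gaussianPDFReal 0 s).comp (by fun_prop)).aestronglyMeasurable
    · exact ae_of_all _ fun w => gaussianPDFReal_nonneg _ _ _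
  simp_rw [h1]
  have hm : Measurable (fun q : ℝ × ℝ => gaussianPDF 0 s (q.1 - q.2)) :=
    (measurable_gaussianPDF 0 s).comp (by fun_prop)
  refine Measure.ext_of_lintegral _ fun f hf => ?_
  rw [Measure.lintegral_conv hf, lintegral_withDensity_eq_lintegral_mul _ hm.lintegral_prod_right' hf]
  have h2 : ∀ x, ∫⁻ y, f (x + y) ∂(gaussianReal 0 s) = ∫⁻ p, gaussianPDF 0 s (p - x) * f p := by
    intro x
    rw [gaussianReal_of_var_ne_zero _ hs, lintegral_withDensity_eq_lintegral_mul _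
      (measurable_gaussianPDF 0 s) (by fun_prop)]
    rw [← lintegral_add_left_eq_self (fun p => gaussianPDF 0 s (p - x) * f p) x]
    simp
  simp_rw [h2]
  rw [lintegral_lintegral_swap]
  · refine lintegral_congr fun p => ?_
    have h4 : Measurable (fun w : ℝ => gaussianPDF 0 s (p - w)) :=
      (measurable_gaussianPDF 0 s).comp (by fun_prop)
    have h5 := lintegral_mul_const (μ := μ) (f p) h4
    rw [h5]
    rfl
  · have h4 : Measurable (fun q : ℝ × ℝ => gaussianPDF 0 s (q.2 - q.1)) :=
      (measurable_gaussianPDF 0 s).comp (by fun_prop)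
    have h5 : Measurable (fun q : ℝ × ℝ => gaussianPDF 0 s (q.2 - q.1) * f q.2) :=
      h4.mul (hf.comp measurable_snd)
    exact h5.aemeasurable

lemma gauss_cont (μ : Measure ℝ) [IsProbabilityMeasure μ] (s : NNReal) :
    Continuous (fun p => ∫ w, gaussianPDFReal 0 s (p - w) ∂μ) := by
  have hc : Continuous (gaussianPDFReal 0 s) := by
    unfold gaussianPDFReal; fun_prop
  refine continuous_of_dominated (bound := fun _ => (√(2 * Real.pi * s))⁻¹) ?_ ?_ ?_ ?_
  · intro p
    exact (hc.comp (by fun_prop)).aestronglyMeasurable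
  · intro p
    refine ae_of_all _ fun w => ?_
    rw [Real.norm_of_nonneg (gaussianPDFReal_nonneg _ _ _), gaussianPDFReal]
    refine mul_le_of_le_one_right (by positivity) ?_
    rw [Real.exp_le_one_iff]
    exact div_nonpos_of_nonpos_of_nonneg (by nlinarith [sq_nonneg (p - w - 0)]) (by positivity)
  · exact integrable_const _
  · exact ae_of_all _ fun w => hc.comp (by fun_prop)

lemma gauss_iff (μ : Measure ℝ) [IsProbabilityMeasure μ] (s r : NNReal) (hs : s ≠ 0) :
    (∀ p, ∫ w, gaussianPDFReal 0 s (p - w) ∂μ = gaussianPDFReal 0 (r + s) p)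
      ↔ μ = gaussianReal 0 r := by
  have hrs : r + s ≠ 0 := by
    intro h; exact hs (by simpa using (add_eq_zero.mp h).2)
  have hcr : Continuous (gaussianPDFReal 0 (r + s)) := by
    unfold gaussianPDFReal; fun_prop
  have key : μ.conv (gaussianReal 0 s) = gaussianReal 0 (r + s) ↔
      ∀ p, ∫ w, gaussianPDFReal 0 s (p - w) ∂μ = gaussianPDFReal 0 (r + s) p := by
    rw [gauss_conv_density μ s hs, gaussianReal_of_var_ne_zero _ hrs,
      withDensity_eq_iff_of_sigmaFinite]
    · have hc1 : Continuous (fun p => ENNReal.ofReal (∫ w, gaussianPDFReal 0 s (p - w) ∂μ)) :=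
        ENNReal.continuous_ofReal.comp (gauss_cont μ s)
      have hc2 : Continuous (gaussianPDF 0 (r + s)) := ENNReal.continuous_ofReal.comp hcr
      rw [hc1.ae_eq_iff_eq volume hc2, funext_iff]
      refine forall_congr' fun p => ?_
      rw [gaussianPDF, ENNReal.ofReal_eq_ofReal_iff]
      · exact integral_nonneg fun w => gaussianPDFReal_nonneg _ _ _
      · exact gaussianPDFReal_nonneg _ _ _
    · exact (ENNReal.continuous_ofReal.comp (gauss_cont μ s)).measurable.aemeasurable
    · exact (measurable_gaussianPDF _ _).aemeasurable
  rw [← key]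
  constructor
  · intro h
    refine Measure.ext_of_charFun ?_
    ext x
    have h2 : μ.conv (gaussianReal 0 s) = (gaussianReal 0 r).conv (gaussianReal 0 s) := by
      rw [h, gaussianReal_conv_gaussianReal, add_zero]
    have h3 := congrArg (fun m => charFun m x) h2
    simp only [charFun_conv] at h3
    refine mul_right_cancel₀ ?_ h3
    rw [charFun_gaussianReal]
    exact Complex.exp_ne_zero _
  · rintro rfl
    rw [gaussianReal_conv_gaussianReal, add_zero]

/-- With `γ = 1/α`, the identity
`γ·E[exp(−(β/2M)(γp − (1−γ)Mv)²)] = exp(−(β/2M)p²)` holds for every `p`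
iff `v` is Gaussian with mean `0` and variance `σ² = (1+α)/(M(1−α)β)`. -/
theorem gibbs_functional_equation_iff_gaussian (M α β : ℝ)
    (hM : 0 < M) (hα0 : 0 < α) (hα1 : α < 1) (hβ : 0 < β)
    (ν : Measure ℝ) [IsProbabilityMeasure ν] (hν : ν ≪ volume) :
    (∀ p : ℝ,
        (1 / α) * ∫ v, Real.exp (-(β / (2 * M)) * ((1 / α) * p - (1 - 1 / α) * M * v) ^ 2) ∂ν
          = Real.exp (-(β / (2 * M)) * p ^ 2))
      ↔ ν = gaussianReal 0 (((1 + α) / (M * (1 - α) * β)).toNNReal) := by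
  have h1α : 0 < 1 - α := by linarith
  set c : ℝ := -((1 - α) * M) with hc
  have hc0 : c ≠ 0 := by rw [hc]; exact neg_ne_zero.mpr (by positivity)
  obtain ⟨s, hs⟩ : ∃ s : NNReal, (s : ℝ) = M * α ^ 2 / β := ⟨⟨_, by positivity⟩, rfl⟩
  obtain ⟨r, hr⟩ : ∃ r : NNReal, (r : ℝ) = M * ((1 - α) * (1 + α)) / β := ⟨⟨_, by positivity⟩, rfl⟩
  have hs0 : s ≠ 0 := by
    intro h
    rw [h] at hs
    have : 0 < M * α ^ 2 / β := by positivity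
    simp only [NNReal.coe_zero] at hs
    linarith
  have hrs : ((r + s : NNReal) : ℝ) = M / β := by
    rw [NNReal.coe_add, hs, hr]; field_simp; ring
  have hmc : Measurable (fun v : ℝ => c * v) := by fun_prop
  have : IsProbabilityMeasure (ν.map (c * ·)) := Measure.isProbabilityMeasure_map hmc.aemeasurable
  have hvar : (0 : ℝ) ≤ (1 + α) / (M * (1 - α) * β) := by positivity
  have hmap : ν.map (c * ·) = gaussianReal 0 r ↔
      ν = gaussianReal 0 (((1 + α) / (M * (1 - α) * β)).toNNReal) := by
    constructor
    · intro h
      have h2 := congrArg (fun m => Measure.map (c⁻¹ * ·) m) h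
      rw [Measure.map_map (by fun_prop) hmc, gaussianReal_map_const_mul] at h2
      have h3 : ((fun x => c⁻¹ * x) ∘ fun x => c * x) = id := by
        ext x; simp [hc0]
      rw [h3, Measure.map_id] at h2
      rw [h2, mul_zero]
      congr 1
      apply NNReal.coe_injective
      rw [Real.coe_toNNReal _ hvar, NNReal.coe_mul, hr, NNReal.coe_mk, hc]
      field_simp
    · intro h
      rw [h, gaussianReal_map_const_mul, mul_zero]
      congr 1
      apply NNReal.coe_injective
      rw [NNReal.coe_mul, Real.coe_toNNReal _ hvar, hr, NNReal.coe_mk, hc]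
      field_simp
  rw [← hmap, ← gauss_iff _ s r hs0]
  refine forall_congr' fun p => ?_
  have hcs : Continuous (fun w => gaussianPDFReal 0 s (p - w)) := by
    unfold gaussianPDFReal; fun_prop
  rw [integral_map hmc.aemeasurable hcs.aestronglyMeasurable]
  simp only [gaussianPDFReal]
  rw [integral_const_mul, hrs, hs]
  have e1 : ∀ v : ℝ, -(β / (2 * M)) * ((1 / α) * p - (1 - 1 / α) * M * v) ^ 2
      = -(p - c * v - 0) ^ 2 / (2 * (M * α ^ 2 / β)) := by
    intro v; rw [hc]; field_simp; ring
  have e2 : -(β / (2 * M)) * p ^ 2 = -(p - 0) ^ 2 / (2 * (M / β)) := by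
    field_simp; ring
  simp_rw [e1]
  rw [e2]
  have e3 : √(2 * Real.pi * (M * α ^ 2 / β)) = α * √(2 * Real.pi * (M / β)) := by
    rw [show 2 * Real.pi * (M * α ^ 2 / β) = α ^ 2 * (2 * Real.pi * (M / β)) by ring,
      Real.sqrt_mul (by positivity), Real.sqrt_sq hα0.le]
  have hK : (√(2 * Real.pi * (M / β)))⁻¹ ≠ 0 := by positivity
  rw [e3, mul_inv, ← one_div α, mul_comm (1 / α) (√(2 * Real.pi * (M / β)))⁻¹, mul_assoc]
  exact (mul_right_inj' hK).symm
end
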